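/- Let A be a finite alphabet and let P be the element of the incidence algebra I(A*) over ℚ defined by P(u,v) = binom(v,u). For every natural number d and all words u ≤ v in A*, the d-th convolution power of P satisfies P^d(u,v) = d^{|v|−|u|} · binom(v,u) (with the convention 0^0 = 1, so that P^0 = δ). -/

import Mathlib

/-- `subwordCount v u` is the number of occurrences of `u` as a (scattered) subword of `v`,
i.e. the number of strictly increasing maps `φ` from the positions of `u` to the positions of
`v` matching the letters. -/
def subwordCount {A : Type*} [DecidableEq A] (v u : List A) : ℕ :=
  ((Finset.univ : Finset (Fin u.length → Fin v.length)).filter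
    (fun φ => (∀ i j : Fin u.length, i < j → φ i < φ j) ∧
      ∀ i : Fin u.length, u.get i = v.get (φ i))).card

/-- The identity `δ` of the incidence algebra `I(A*)` over `ℚ`. -/
def deltaW {A : Type*} [DecidableEq A] (u v : List A) : ℚ := if u = v then 1 else 0

/-- Convolution in the incidence algebra `I(A*)` of words under the subword order:
`(FG)(u,v) = ∑_{u ≤ z ≤ v} F(u,z)·G(z,v)`.  The words `z` with `u ≤ z ≤ v` are exactly the
sublists `z` of `v` with `subwordCount z u > 0`. -/
def convW {A : Type*} [DecidableEq A] (F G : List A → List A → ℚ) (u v : List A) : ℚ :=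
  ∑ z ∈ v.sublists.toFinset.filter (fun z => 0 < subwordCount z u), F u z * G z v

/-- Convolution powers, with `F ^ 0 = δ`. -/
def convPowW {A : Type*} [DecidableEq A] (F : List A → List A → ℚ) :
    ℕ → List A → List A → ℚ
  | 0 => deltaW
  | ℓ + 1 => convW F (convPowW F ℓ)

/-- The element `H` of `I(A*)`: `H(u,v) = binom(v,u)` if `|v| = |u| + 1`, else `0`. -/
def HW {A : Type*} [DecidableEq A] (u v : List A) : ℚ :=
  if v.length = u.length + 1 then (subwordCount v u : ℚ) else 0

/-- The element `P` of `I(A*)`: `P(u,v) = binom(v,u)`. -/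
def PW {A : Type*} [DecidableEq A] (u v : List A) : ℚ := subwordCount v u

def occN {A : Type*} [DecidableEq A] {k n : ℕ} (f : Fin k → A) (g : Fin n → A) :
    Finset (Fin k → Fin n) :=
  (Finset.univ : Finset (Fin k → Fin n)).filter
    (fun φ => (∀ i j : Fin k, i < j → φ i < φ j) ∧ ∀ i : Fin k, f i = g (φ i))

theorem occN_succ {A : Type*} [DecidableEq A] {k n : ℕ} (f : Fin (k+1) → A) (g : Fin (n+1) → A) :
    (occN f g).card = (occN f (fun i => g i.succ)).card +
      if f 0 = g 0 then (occN (fun i => f i.succ) (fun i => g i.succ)).card else 0 := by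
  classical
  have key : occN f g = (occN f (fun i => g i.succ)).image (fun ψ i => (ψ i).succ) ∪
      if f 0 = g 0 then (occN (fun i => f i.succ) (fun i => g i.succ)).image
        (fun ψ => (Fin.cons 0 (fun i => (ψ i).succ) : Fin (k+1) → Fin (n+1))) else ∅ := by
    ext φ
    constructor
    · intro h
      simp only [occN, Finset.mem_filter, Finset.mem_univ, true_and] at h
      obtain ⟨h1, h2⟩ := h
      rw [Finset.mem_union]
      by_cases h0 : φ 0 = 0
      · right
        have hp : ∀ i : Fin k, φ i.succ ≠ 0 := by
          intro i hi
          have := h1 0 i.succ (Fin.succ_pos i)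
          rw [hi] at this
          exact absurd this (by simp)
        have h00 : f 0 = g 0 := by rw [h2 0, h0]
        rw [if_pos h00, Finset.mem_image]
        refine ⟨fun i => (φ i.succ).pred (hp i), ?_, ?_⟩
        · simp only [occN, Finset.mem_filter, Finset.mem_univ, true_and]
          refine ⟨fun i j hij => ?_, fun i => ?_⟩
          · rw [Fin.pred_lt_pred_iff]
            exact h1 _ _ (Fin.succ_lt_succ_iff.2 hij)
          · rw [Fin.succ_pred]; exact h2 _
        · funext i
          refine Fin.cases ?_ (fun i => ?_) i
          · simp [h0]
          · simp
      · left
        have hp : ∀ i, φ i ≠ 0 := by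
          intro i
          by_cases hi : i = 0
          · rw [hi]; exact h0
          · intro hh
            have := h1 0 i (Fin.pos_of_ne_zero hi)
            rw [hh] at this
            exact absurd this (by simp)
        rw [Finset.mem_image]
        refine ⟨fun i => (φ i).pred (hp i), ?_, ?_⟩
        · simp only [occN, Finset.mem_filter, Finset.mem_univ, true_and]
          refine ⟨fun i j hij => ?_, fun i => ?_⟩
          · rw [Fin.pred_lt_pred_iff]
            exact h1 _ _ hij
          · rw [Fin.succ_pred]; exact h2 _
        · funext i
          simp
    · intro h
      rw [Finset.mem_union] at h
      rcases h with h | h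
      · rw [Finset.mem_image] at h
        obtain ⟨ψ, h, rfl⟩ := h
        simp only [occN, Finset.mem_filter, Finset.mem_univ, true_and] at h ⊢
        exact ⟨fun i j hij => Fin.succ_lt_succ_iff.2 (h.1 i j hij), h.2⟩
      · split_ifs at h with h0
        · rw [Finset.mem_image] at h
          obtain ⟨ψ, h, rfl⟩ := h
          simp only [occN, Finset.mem_filter, Finset.mem_univ, true_and] at h ⊢
          refine ⟨fun i j => ?_, fun i => ?_⟩
          · refine Fin.cases ?_ (fun j => ?_) j
            · intro h; exact absurd h (by simp)
            · refine Fin.cases ?_ (fun i => ?_) i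
              · intro _; simp
              · intro hij
                simpa using h.1 i j (Fin.succ_lt_succ_iff.1 hij)
          · refine Fin.cases ?_ (fun i => ?_) i
            · simpa using h0
            · simpa using h.2 i
        · simp at h
  rw [key, Finset.card_union_of_disjoint]
  · congr 1
    · apply Finset.card_image_of_injective
      intro a b hab
      funext i
      exact Fin.succ_injective _ (congrFun hab i)
    · split_ifs
      · apply Finset.card_image_of_injective
        intro a b hab
        funext i
        have := congrFun hab i.succ
        simpa using this
      · rfl
  · split_ifs
    · rw [Finset.disjoint_left]
      intro φ ha hb
      rw [Finset.mem_image] at ha hb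
      obtain ⟨a, -, rfl⟩ := ha
      obtain ⟨b, -, hb⟩ := hb
      have := congrFun hb 0
      simp at this
      exact absurd this.symm (Fin.succ_ne_zero _)
    · simp

theorem swc_cons {A : Type*} [DecidableEq A] (a b : A) (u v : List A) :
    subwordCount (b :: v) (a :: u) = subwordCount v (a :: u) +
      if a = b then subwordCount v u else 0 :=
  occN_succ (k := u.length) (n := v.length) (a :: u).get (b :: v).get

theorem swc_nil {A : Type*} [DecidableEq A] (v : List A) : subwordCount v [] = 1 := by
  unfold subwordCount
  rw [Finset.filter_true_of_mem]
  · simp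
  · intro φ _
    exact ⟨fun i => i.elim0, fun i => i.elim0⟩

theorem swc_nil_cons {A : Type*} [DecidableEq A] (a : A) (u : List A) :
    subwordCount [] (a :: u) = 0 := by
  unfold subwordCount
  rw [Finset.card_eq_zero, Finset.eq_empty_iff_forall_notMem]
  intro φ _
  exact (φ ⟨0, by simp⟩).elim0

theorem swc_count {A : Type*} [DecidableEq A] (v : List A) : ∀ u : List A,
    subwordCount v u = v.sublists'.count u := by
  induction v with
  | nil =>
    intro u
    cases u with
    | nil => simp [swc_nil]
    | cons a u => simp [swc_nil_cons]
  | cons b v ih =>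
    intro u
    rw [List.sublists'_cons, List.count_append]
    cases u with
    | nil =>
      rw [← ih, swc_nil, swc_nil, List.count_eq_zero_of_not_mem]
      simp
    | cons a u =>
      rw [← ih, swc_cons]
      congr 1
      split_ifs with h
      · subst h
        rw [List.count_map_of_injective _ _ (List.cons_injective), ih]
      · rw [List.count_eq_zero_of_not_mem]
        simp only [List.mem_map, not_exists, not_and]
        rintro x _ hx
        exact h (List.cons.inj hx).1.symm

theorem swc_sublist {A : Type*} [DecidableEq A] (u v : List A) :
    0 < subwordCount v u ↔ u.Sublist v := by
  rw [swc_count, List.count_pos_iff, List.mem_sublists']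

theorem sum_main {A : Type*} [DecidableEq A] (x : ℚ) (v : List A) : ∀ u : List A,
    (v.sublists'.map (fun z => x ^ (v.length - z.length) * (subwordCount z u : ℚ))).sum =
      (x + 1) ^ (v.length - u.length) * subwordCount v u := by
  induction v with
  | nil => intro u; simp
  | cons b v ih =>
    intro u
    have h1 : ∀ u : List A, (v.sublists'.map (fun z =>
        x ^ ((b :: v).length - z.length) * (subwordCount z u : ℚ))).sum =
        x * (v.sublists'.map (fun z => x ^ (v.length - z.length) * (subwordCount z u : ℚ))).sum := by
      intro u
      rw [← List.sum_map_mul_left]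
      congr 1
      apply List.map_congr_left
      intro z hz
      have := (List.mem_sublists'.1 hz).length_le
      rw [List.length_cons, Nat.sub_add_comm this, pow_succ]
      ring
    rw [List.sublists'_cons, List.map_append, List.sum_append, h1, ih, List.map_map]
    cases u with
    | nil =>
      have h2 := ih []
      simp only [swc_nil, Nat.cast_one, mul_one, List.length_nil, Nat.sub_zero,
        Function.comp_def, List.length_cons, Nat.add_sub_add_right] at h2 ⊢
      rw [h2]; ring
    | cons a u =>
      have h2 : (v.sublists'.map ((fun z =>
          x ^ ((b :: v).length - z.length) * (subwordCount z (a :: u) : ℚ)) ∘ List.cons b)).sum =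
          (v.sublists'.map (fun z => x ^ (v.length - z.length) * (subwordCount z (a :: u) : ℚ))).sum
          + (if a = b then 1 else 0) *
          (v.sublists'.map (fun z => x ^ (v.length - z.length) * (subwordCount z u : ℚ))).sum := by
        rw [← List.sum_map_mul_left, ← List.sum_map_add]
        congr 1
        apply List.map_congr_left
        intro z hz
        simp only [Function.comp_def, List.length_cons, Nat.add_sub_add_right, swc_cons]
        split_ifs <;> push_cast <;> ring
      rw [h2, ih, ih, swc_cons]
      simp only [List.length_cons, Nat.add_sub_add_right]
      have h3 : (x + 1) ^ (v.length - u.length) * (subwordCount v (a :: u) : ℚ) =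
          (x + 1) * ((x + 1) ^ (v.length - (u.length + 1)) * (subwordCount v (a :: u) : ℚ)) := by
        rcases Nat.eq_zero_or_pos (subwordCount v (a :: u)) with h | h
        · simp [h]
        · have := ((swc_sublist _ _).1 h).length_le
          rw [List.length_cons] at this
          have e : v.length - u.length = (v.length - (u.length + 1)) + 1 := by omega
          rw [e, pow_succ]; ring
      push_cast
      rw [mul_add, h3]
      split_ifs <;> push_cast <;> ring

/-- For every natural number `d` and all words `u ≤ v`,
`P^d(u,v) = d^{|v|−|u|} · binom(v,u)` (with `0^0 = 1`, so that `P^0 = δ`). -/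
theorem convPow_PW_apply {A : Type*} [Fintype A] [DecidableEq A] (d : ℕ) (u v : List A)
    (h : 0 < subwordCount v u) :
    convPowW PW d u v = (d : ℚ) ^ (v.length - u.length) * subwordCount v u := by
  induction d generalizing u v with
  | zero =>
    have hs := (swc_sublist _ _).1 h
    simp only [convPowW, deltaW]
    split_ifs with e
    · subst e
      have h1 := sum_main (0 : ℚ) u u
      have : subwordCount u u = 1 := by
        clear h1 hs h
        induction u with
        | nil => exact swc_nil _
        | cons a u ih =>
          rw [swc_cons, if_pos rfl, ih]
          have : ¬ 0 < subwordCount u (a :: u) := by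
            rw [swc_sublist]
            intro hh
            have := hh.length_le
            simp at this
          omega
      simp [this]
    · have : v.length - u.length ≠ 0 := by
        intro h0
        exact e (hs.eq_of_length_le (by omega))
      simp [this]
  | succ d ih =>
    have h1 := sum_main (d : ℚ) v u
    push_cast
    rw [← h1, Finset.sum_list_map_count]
    simp only [convPowW, convW]
    rw [Finset.sum_filter]
    apply Finset.sum_congr
    · ext z; simp
    · intro z hz
      have hz' : 0 < subwordCount v z := by
        rw [swc_sublist]; simpa using hz
      have hc : subwordCount v z =
          @List.count (List A) instBEqOfDecidableEq z v.sublists' := by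
        rw [swc_count]
        congr 1
        apply lawful_beq_subsingleton
      rw [ih z v hz', ← hc]
      split_ifs with h0
      · simp only [PW, nsmul_eq_mul]; ring
      · have : subwordCount z u = 0 := by omega
        simp [this]
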